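/- Let N ≥ 2, 1 < p ≤ N and p − 1 < q < q_c, and let Ω ⊆ ℝ^N be an open set containing the closed unit ball. Let u be a strong solution of (E) on Ω ∖ {0} with u > 0 on Ω ∖ {0}, and assume liminf_{x→0} u(x)/μ_p(x) = ∞. Then lim_{x→0} |x|^{β_q} u(x) = λ_{N,p,q}; moreover, with M = max{ u(z) : |z| = 1 }, one has λ_{N,p,q} (|x|^{−β_q} − 1) ≤ u(x) ≤ λ_{N,p,q} (|x|^{−β_q} − 1) + M for all 0 < |x| < 1. -/

import Mathlib

open Metric Set Filter Topology MeasureTheory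

/-- The vector field `x ↦ |∇u(x)|^{p-2} ∇u(x)`. -/
noncomputable def pGradField {N : ℕ} (p : ℝ) (u : EuclideanSpace ℝ (Fin N) → ℝ)
    (x : EuclideanSpace ℝ (Fin N)) : EuclideanSpace ℝ (Fin N) :=
  ‖gradient u x‖ ^ (p - 2) • gradient u x

/-- A strong solution of `(E) : -Δ_p u + |∇u|^q = 0` on an open set `G ⊆ ℝ^N`. -/
def IsStrongSolution {N : ℕ} (p q : ℝ) (G : Set (EuclideanSpace ℝ (Fin N)))
    (u : EuclideanSpace ℝ (Fin N) → ℝ) : Prop :=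
  ContDiffOn ℝ 1 u G ∧
  ContDiffOn ℝ 3 u {x | x ∈ G ∧ gradient u x ≠ 0} ∧
  ∀ x ∈ G, DifferentiableAt ℝ (pGradField p u) x ∧
    LinearMap.trace ℝ (EuclideanSpace ℝ (Fin N))
      (fderiv ℝ (pGradField p u) x : EuclideanSpace ℝ (Fin N) →ₗ[ℝ] EuclideanSpace ℝ (Fin N))
      = ‖gradient u x‖ ^ q

/-- The fundamental solution of the p-Laplacian in `ℝ^N`. -/
noncomputable def mup (N : ℕ) (p : ℝ) (x : EuclideanSpace ℝ (Fin N)) : ℝ :=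
  if p < N then ((p - 1) / ((N : ℝ) - p)) * ‖x‖ ^ ((p - (N : ℝ)) / (p - 1))
  else -Real.log ‖x‖

/-!
If `κ = (N-1)(q+1-p)/(p-1)` and `b = (N(p-1)-(N-1)q)/(q+1-p)`, the decreasing radial profile
vanishing at `|x| = 1` with slope `-(a t + C t^κ)^{-(β_q+1)}` solves `-Δ_p w + a b |∇w|^q = 0`. For
`a b < 1` (resp. `a b > 1`) it is a strict supersolution (resp. subsolution) of (E), so its
difference with `u` has no interior extremum of the relevant kind and only boundary values have to
be compared. For `C < 0` the profile blows up at a positive radius, which gives an upper bound for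
`u` without information at the origin. For `C > 0` it is `O(μ_p)`, so `u / μ_p → ∞` gives the
comparison near the origin and hence a lower bound for `u`. Choosing `a = 1/b + C` and letting
`C → 0` from either side yields the bounds with constant `λ_{N,p,q} = b^{β_q+1} / β_q`, and they
squeeze `|x|^{β_q} u(x)`.
-/

open scoped Gradient

section Calculus

variable {E : Type*} [NormedAddCommGroup E] [InnerProductSpace ℝ E]

lemma hasFDerivAt_norm_of_ne_zero {x : E} (hx : x ≠ 0) :
    HasFDerivAt (fun y : E => ‖y‖) (‖x‖⁻¹ • innerSL ℝ x) x := by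
  have hsq := (hasStrictFDerivAt_norm_sq x).hasFDerivAt.sqrt
    (pow_ne_zero 2 (norm_ne_zero_iff.2 hx))
  simp only [Real.sqrt_sq (norm_nonneg _)] at hsq
  refine hsq.congr_fderiv ?_
  ext y
  simp only [smul_apply, innerSL_apply_apply, smul_eq_mul, nsmul_eq_mul]
  field_simp
  norm_num

lemma hasFDerivAt_radial_smul {φ : ℝ → ℝ} {φ' : ℝ} {x : E} (hx : x ≠ 0)
    (hφ : HasDerivAt φ φ' ‖x‖) :
    HasFDerivAt (fun y : E => φ ‖y‖ • y)
      (φ ‖x‖ • ContinuousLinearMap.id ℝ E + (φ' / ‖x‖) • (innerSL ℝ x).smulRight x) x := by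
  refine ((hφ.comp_hasFDerivAt x (hasFDerivAt_norm_of_ne_zero hx)).smul
    (hasFDerivAt_id x)).congr_fderiv ?_
  ext y
  simp [smul_smul, div_eq_mul_inv, mul_assoc]

lemma hasGradientAt_radial [CompleteSpace E] {w : ℝ → ℝ} {w' : ℝ} {x : E} (hx : x ≠ 0)
    (hw : HasDerivAt w w' ‖x‖) :
    HasGradientAt (fun y : E => w ‖y‖) ((w' / ‖x‖) • x) x := by
  rw [hasGradientAt_iff_hasFDerivAt]
  refine (hw.comp_hasFDerivAt x (hasFDerivAt_norm_of_ne_zero hx)).congr_fderiv ?_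
  ext y
  simp [div_eq_mul_inv, mul_assoc]

lemma hasFDerivAt_gradient_radial [CompleteSpace E] {w w' : ℝ → ℝ} {w'' : ℝ} {x : E}
    (hx : x ≠ 0) (hw : ∀ᶠ t in 𝓝 ‖x‖, HasDerivAt w (w' t) t)
    (hw' : HasDerivAt w' w'' ‖x‖) :
    HasFDerivAt (∇ fun y : E => w ‖y‖)
      ((w' ‖x‖ / ‖x‖) • ContinuousLinearMap.id ℝ E +
        ((w'' - w' ‖x‖ / ‖x‖) / ‖x‖ ^ 2) • (innerSL ℝ x).smulRight x) x := by
  have hn : ‖x‖ ≠ 0 := norm_ne_zero_iff.2 hx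
  have hgrad : (∇ fun y : E => w ‖y‖) =ᶠ[𝓝 x] fun y => (w' ‖y‖ / ‖y‖) • y := by
    filter_upwards [continuous_norm.continuousAt.eventually hw, isOpen_ne.mem_nhds hx]
      with y hy hy0 using (hasGradientAt_radial hy0 hy).gradient
  refine ((hasFDerivAt_radial_smul hx (hw'.fun_div (hasDerivAt_id ‖x‖) hn)).congr_fderiv
    ?_).congr_of_eventuallyEq hgrad
  simp only [id]
  congr 2
  field_simp

lemma gradient_sub [CompleteSpace E] {f g : E → ℝ} {x : E} (hf : DifferentiableAt ℝ f x)
    (hg : DifferentiableAt ℝ g x) : ∇ (fun y => f y - g y) x = ∇ f x - ∇ g x := by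
  refine HasGradientAt.gradient ?_
  rw [hasGradientAt_iff_hasFDerivAt, map_sub, toDual_gradient, toDual_gradient]
  exact hf.hasFDerivAt.fun_sub hg.hasFDerivAt

lemma gradient_eq_of_isLocalMax_sub [CompleteSpace E] {f g : E → ℝ} {x : E}
    (hf : DifferentiableAt ℝ f x) (hg : DifferentiableAt ℝ g x)
    (hmax : IsLocalMax (fun y => f y - g y) x) : ∇ f x = ∇ g x := by
  rw [← sub_eq_zero, ← gradient_sub hf hg, gradient, hmax.fderiv_eq_zero, map_zero]

-- If the second derivative along a line were positive, `x` would also be a local minimum on that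
-- line, so the function would be constant there.
lemma deriv_deriv_nonpos_of_isLocalMax {f : ℝ → ℝ} {x : ℝ} (hmax : IsLocalMax f x)
    (hf : ContinuousAt f x) : deriv (deriv f) x ≤ 0 := by
  by_contra! hpos
  have hmin : IsLocalMin f x := isLocalMin_of_deriv_deriv_pos hpos hmax.deriv_eq_zero hf
  have hconst : f =ᶠ[𝓝 x] fun _ => f x := by
    filter_upwards [hmax, hmin] with t hle hge using le_antisymm hle hge
  rw [hconst.deriv.deriv_eq] at hpos
  simp at hpos

lemma inner_fderiv_gradient_nonpos_of_isLocalMax [CompleteSpace E] {f : E → ℝ} {x : E}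
    (hmax : IsLocalMax f x) (hf : ∀ᶠ y in 𝓝 x, DifferentiableAt ℝ f y)
    (hf' : DifferentiableAt ℝ (∇ f) x) (e : E) : inner ℝ (fderiv ℝ (∇ f) x e) e ≤ 0 := by
  have hline (t : ℝ) : HasDerivAt (fun t : ℝ => x + t • e) e t := by
    simpa using ((hasDerivAt_id t).smul_const e).const_add x
  have htend : Tendsto (fun t : ℝ => x + t • e) (𝓝 0) (𝓝 x) := by
    simpa using (hline 0).continuousAt.tendsto
  have hfirst : ∀ᶠ t : ℝ in 𝓝 0, HasDerivAt (fun t : ℝ => f (x + t • e))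
      (inner ℝ (∇ f (x + t • e)) e) t := by
    filter_upwards [htend.eventually hf] with t ht
    simpa [Function.comp_def] using
      (hasGradientAt_iff_hasFDerivAt.1 ht.hasGradientAt).comp_hasDerivAt t (hline t)
  have hsecond : HasDerivAt (fun t : ℝ => inner ℝ (∇ f (x + t • e)) e)
      (inner ℝ (fderiv ℝ (∇ f) x e) e) 0 := by
    have hgrad : HasFDerivAt (∇ f) (fderiv ℝ (∇ f) x) (x + (0 : ℝ) • e) := by
      simpa using hf'.hasFDerivAt
    simpa using (hgrad.comp_hasDerivAt (0 : ℝ) (hline 0)).inner ℝ (hasDerivAt_const (0 : ℝ) e)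
  have hderiv : deriv (fun t : ℝ => f (x + t • e)) =ᶠ[𝓝 0] fun t => inner ℝ (∇ f (x + t • e)) e :=
    hfirst.mono fun t ht => ht.deriv
  rw [← hsecond.deriv, ← hderiv.deriv_eq]
  refine deriv_deriv_nonpos_of_isLocalMax ?_ hfirst.self_of_nhds.continuousAt
  simpa [IsLocalMax, IsMaxFilter] using htend.eventually hmax

lemma trace_le_inner_div_norm_sq [FiniteDimensional ℝ E] {L : E →ₗ[ℝ] E}
    (hL : ∀ e, inner ℝ (L e) e ≤ 0) {ξ : E} (hξ : ξ ≠ 0) :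
    LinearMap.trace ℝ E L ≤ inner ℝ (L ξ) ξ / ‖ξ‖ ^ 2 := by
  have hunit : Orthonormal ℝ ((↑) : ({‖ξ‖⁻¹ • ξ} : Set E) → E) := by
    rw [orthonormal_subsingleton_iff]
    rintro ⟨e, rfl⟩
    exact norm_smul_inv_norm (𝕜 := ℝ) hξ
  obtain ⟨s, B, hs, hB⟩ := hunit.exists_orthonormalBasis_extension
  obtain ⟨j, hj⟩ : ∃ j, B j = ‖ξ‖⁻¹ • ξ := ⟨⟨_, hs rfl⟩, by rw [hB]⟩
  have hsum := Finset.single_le_sum (f := fun i => -inner ℝ (L (B i)) (B i))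
    (fun i _ => neg_nonneg.2 (hL (B i))) (Finset.mem_univ j)
  rw [Finset.sum_neg_distrib, neg_le_neg_iff] at hsum
  calc LinearMap.trace ℝ E L
      = ∑ i, inner ℝ (L (B i)) (B i) := by
        simp only [LinearMap.trace_eq_sum_inner _ B, real_inner_comm]
    _ ≤ inner ℝ (L (B j)) (B j) := hsum
    _ = inner ℝ (L ξ) ξ / ‖ξ‖ ^ 2 := by
        rw [hj, map_smul, inner_smul_left, inner_smul_right]
        simp only [conj_trivial]
        ring

end Calculus

section PLaplacian

variable {E : Type*} [NormedAddCommGroup E] [InnerProductSpace ℝ E] [FiniteDimensional ℝ E]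
  {p : ℝ} {f g : E → ℝ} {x : E}

/-- The `p`-Laplacian `div (|∇f|^{p-2} ∇f)`; junk where that vector field is not differentiable. -/
noncomputable def pLaplacian (p : ℝ) (f : E → ℝ) (x : E) : ℝ :=
  LinearMap.trace ℝ E (fderiv ℝ (fun y => ‖∇ f y‖ ^ (p - 2) • ∇ f y) x : E →ₗ[ℝ] E)

lemma pLaplacian_eq (p : ℝ) (hf : DifferentiableAt ℝ (∇ f) x) (hx : ∇ f x ≠ 0) :
    pLaplacian p f x = ‖∇ f x‖ ^ (p - 2) *
      (LinearMap.trace ℝ E (fderiv ℝ (∇ f) x : E →ₗ[ℝ] E)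
        + (p - 2) * (inner ℝ (fderiv ℝ (∇ f) x (∇ f x)) (∇ f x) / ‖∇ f x‖ ^ 2)) := by
  set ξ := ∇ f x
  set H := fderiv ℝ (∇ f) x
  have hpow : HasDerivAt (fun r : ℝ => r ^ (p - 2)) ((p - 2) * ‖ξ‖ ^ (p - 2 - 1)) ‖ξ‖ :=
    Real.hasDerivAt_rpow_const (Or.inl (norm_ne_zero_iff.2 hx))
  have hfield := (hasFDerivAt_radial_smul hx hpow).comp x hf.hasFDerivAt
  have hsplit : (((‖ξ‖ ^ (p - 2) • ContinuousLinearMap.id ℝ E +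
      ((p - 2) * ‖ξ‖ ^ (p - 2 - 1) / ‖ξ‖) • (innerSL ℝ ξ).smulRight ξ).comp H : E →L[ℝ] E)
        : E →ₗ[ℝ] E) = ‖ξ‖ ^ (p - 2) • (H : E →ₗ[ℝ] E) + ((p - 2) * ‖ξ‖ ^ (p - 2 - 1) / ‖ξ‖) •
          (((innerSL ℝ ξ : E →L[ℝ] ℝ) : E →ₗ[ℝ] ℝ) ∘ₗ (H : E →ₗ[ℝ] E)).smulRight ξ := by
    ext
    simp
  have htrace := congrArg (fun L : E →L[ℝ] E => LinearMap.trace ℝ E (L : E →ₗ[ℝ] E)) hfield.fderiv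
  rw [hsplit, map_add, map_smul, map_smul, LinearMap.trace_smulRight] at htrace
  refine htrace.trans ?_
  have hn : ‖ξ‖ ≠ 0 := norm_ne_zero_iff.2 hx
  simp only [smul_eq_mul, LinearMap.comp_apply, ContinuousLinearMap.coe_coe, innerSL_apply_apply,
    Real.rpow_sub_one hn, real_inner_comm]
  field_simp

theorem pLaplacian_le_of_isLocalMax_sub (hp : 1 < p) (hmax : IsLocalMax (fun y => f y - g y) x)
    (hf : ∀ᶠ y in 𝓝 x, DifferentiableAt ℝ f y) (hg : ∀ᶠ y in 𝓝 x, DifferentiableAt ℝ g y)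
    (hf' : DifferentiableAt ℝ (∇ f) x) (hg' : DifferentiableAt ℝ (∇ g) x) (hx : ∇ g x ≠ 0) :
    pLaplacian p f x ≤ pLaplacian p g x := by
  have hgrad : ∇ f x = ∇ g x :=
    gradient_eq_of_isLocalMax_sub hf.self_of_nhds hg.self_of_nhds hmax
  have hsub : ∇ (fun y => f y - g y) =ᶠ[𝓝 x] ∇ f - ∇ g := by
    filter_upwards [hf, hg] with y hfy hgy using gradient_sub hfy hgy
  set D : E →L[ℝ] E := fderiv ℝ (∇ f) x - fderiv ℝ (∇ g) x
  have hD : fderiv ℝ (∇ fun y => f y - g y) x = D := by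
    rw [hsub.fderiv_eq, fderiv_sub hf' hg']
  have hDnonpos (e : E) : inner ℝ (D e) e ≤ 0 := by
    rw [← hD]
    refine inner_fderiv_gradient_nonpos_of_isLocalMax hmax ?_
      ((hf'.sub hg').congr_of_eventuallyEq hsub) e
    filter_upwards [hf, hg] with y hfy hgy using hfy.fun_sub hgy
  have htrace := trace_le_inner_div_norm_sq (L := (D : E →ₗ[ℝ] E)) hDnonpos hx
  have hdir : inner ℝ (D (∇ g x)) (∇ g x) / ‖∇ g x‖ ^ 2 ≤ 0 :=
    div_nonpos_of_nonpos_of_nonneg (hDnonpos _) (by positivity)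
  rw [pLaplacian_eq p hf' (hgrad ▸ hx), pLaplacian_eq p hg' hx, hgrad]
  refine mul_le_mul_of_nonneg_left ?_ (by positivity)
  simp only [D, ContinuousLinearMap.toLinearMap_sub, map_sub, ContinuousLinearMap.coe_coe,
    LinearMap.sub_apply, sub_apply, inner_sub_left, sub_div] at htrace hdir
  nlinarith

lemma trace_smul_id_add_smulRight (a b : ℝ) (x : E) :
    LinearMap.trace ℝ E ((a • ContinuousLinearMap.id ℝ E + b • (innerSL ℝ x).smulRight x :
      E →L[ℝ] E) : E →ₗ[ℝ] E) = Module.finrank ℝ E * a + b * ‖x‖ ^ 2 := by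
  have hcoe : ((a • ContinuousLinearMap.id ℝ E + b • (innerSL ℝ x).smulRight x : E →L[ℝ] E) :
      E →ₗ[ℝ] E) = a • LinearMap.id + b • ((innerSL ℝ x : E →L[ℝ] ℝ) : E →ₗ[ℝ] ℝ).smulRight x :=
    rfl
  rw [hcoe, map_add, map_smul, map_smul, LinearMap.trace_id, LinearMap.trace_smulRight,
    smul_eq_mul, smul_eq_mul, ContinuousLinearMap.coe_coe, innerSL_apply_apply,
    real_inner_self_eq_norm_sq, mul_comm a]

lemma pLaplacian_radial (p : ℝ) {w w' : ℝ → ℝ} {w'' : ℝ} (hx : x ≠ 0)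
    (hw : ∀ᶠ t in 𝓝 ‖x‖, HasDerivAt w (w' t) t) (hw' : HasDerivAt w' w'' ‖x‖)
    (hne : w' ‖x‖ ≠ 0) :
    pLaplacian p (fun y => w ‖y‖) x = |w' ‖x‖| ^ (p - 2) *
      ((p - 1) * w'' + (Module.finrank ℝ E - 1) / ‖x‖ * w' ‖x‖) := by
  have hn : ‖x‖ ≠ 0 := norm_ne_zero_iff.2 hx
  have hgrad := (hasGradientAt_radial hx hw.self_of_nhds).gradient
  have hgrad_ne : ∇ (fun y : E => w ‖y‖) x ≠ 0 :=
    hgrad ▸ smul_ne_zero (div_ne_zero hne hn) hx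
  have hhess := hasFDerivAt_gradient_radial hx hw hw'
  have hnorm : ‖(w' ‖x‖ / ‖x‖) • x‖ = |w' ‖x‖| := by
    rw [norm_smul, norm_div, norm_norm, Real.norm_eq_abs, div_mul_cancel₀ _ hn]
  have hdir : inner ℝ (((w' ‖x‖ / ‖x‖) • ContinuousLinearMap.id ℝ E +
        ((w'' - w' ‖x‖ / ‖x‖) / ‖x‖ ^ 2) • (innerSL ℝ x).smulRight x : E →L[ℝ] E)
          ((w' ‖x‖ / ‖x‖) • x)) ((w' ‖x‖ / ‖x‖) • x) / |w' ‖x‖| ^ 2 = w'' := by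
    simp only [map_smul, add_apply, smul_apply, ContinuousLinearMap.id_apply,
      ContinuousLinearMap.smulRight_apply, innerSL_apply_apply, real_inner_self_eq_norm_sq,
      smul_add, inner_smul_right, real_inner_smul_left, inner_add_left, sq_abs]
    field_simp
    ring
  rw [pLaplacian_eq p hhess.differentiableAt hgrad_ne, hhess.fderiv, hgrad, hnorm, hdir,
    trace_smul_id_add_smulRight]
  field_simp
  ring

end PLaplacian

section Barrier

variable {κ β a C r t : ℝ}

/-- The factor `a t + C t^κ` whose power `-(β + 1)` is minus the slope of `barrier`. With
`κ = (N-1)(q+1-p)/(p-1)`, `β = β_q` and `a b = 1` it is the general solution of the linear equation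
to which the radial form of (E) reduces. -/
noncomputable def barrierBase (κ a C t : ℝ) : ℝ :=
  a * t + C * t ^ κ

/-- The decreasing radial profile vanishing at `r = 1` with slope `-(a t + C t^κ)^{-(β+1)}`; only
meaningful on intervals `[r, 1]` on which the base is positive. -/
noncomputable def barrier (κ β a C r : ℝ) : ℝ :=
  ∫ t in r..1, barrierBase κ a C t ^ (-(β + 1))

lemma barrierBase_eq_rpow_mul (ht : 0 < t) :
    barrierBase κ a C t = t ^ κ * (a * t ^ (1 - κ) + C) := by
  rw [barrierBase, mul_add, mul_left_comm, ← Real.rpow_add ht, add_sub_cancel, Real.rpow_one,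
    mul_comm C]

lemma barrierBase_pos_iff (ht : 0 < t) :
    0 < barrierBase κ a C t ↔ 0 < a * t ^ (1 - κ) + C := by
  rw [barrierBase_eq_rpow_mul ht, mul_pos_iff_of_pos_left (Real.rpow_pos_of_pos ht κ)]

lemma barrierBase_eq_zero_iff (ht : 0 < t) :
    barrierBase κ a C t = 0 ↔ a * t ^ (1 - κ) + C = 0 := by
  rw [barrierBase_eq_rpow_mul ht, mul_eq_zero_iff_left (Real.rpow_pos_of_pos ht κ).ne']

lemma barrierBase_pos_of_le (ha : 0 ≤ a) (hκ : κ ≤ 1) (hr : 0 < r) (hrt : r ≤ t)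
    (hpos : 0 < barrierBase κ a C r) : 0 < barrierBase κ a C t := by
  rw [barrierBase_pos_iff hr] at hpos
  rw [barrierBase_pos_iff (hr.trans_le hrt)]
  refine hpos.trans_le ?_
  gcongr

lemma barrierBase_pos_of_lt (ha : 0 < a) (hκ : κ < 1) (hr : 0 < r) (hrt : r < t)
    (hzero : barrierBase κ a C r = 0) : 0 < barrierBase κ a C t := by
  rw [barrierBase_eq_zero_iff hr] at hzero
  rw [barrierBase_pos_iff (hr.trans hrt), ← hzero]
  gcongr

lemma exists_barrierBase_eq_zero (ha : 0 < a) (hκ : κ < 1) (hC : C < 0) :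
    ∃ δ, 0 < δ ∧ barrierBase κ a C δ = 0 := by
  have hquot : 0 < -C / a := div_pos (neg_pos.2 hC) ha
  refine ⟨(-C / a) ^ (1 - κ)⁻¹, Real.rpow_pos_of_pos hquot _, ?_⟩
  rw [barrierBase_eq_zero_iff (Real.rpow_pos_of_pos hquot _),
    Real.rpow_inv_rpow hquot.le (sub_pos.2 hκ).ne', mul_div_cancel₀ _ ha.ne', neg_add_cancel]

lemma hasDerivAt_barrierBase (κ a C : ℝ) (ht : t ≠ 0) :
    HasDerivAt (barrierBase κ a C) (a + C * (κ * t ^ (κ - 1))) t :=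
  ((hasDerivAt_id t).const_mul a).fun_add
    ((Real.hasDerivAt_rpow_const (p := κ) (Or.inl ht)).const_mul C)
    |>.congr_deriv (by rw [mul_one])

lemma hasDerivAt_neg_barrierBase_rpow (ht : t ≠ 0) (hpos : 0 < barrierBase κ a C t) :
    HasDerivAt (fun t => -barrierBase κ a C t ^ (-(β + 1)))
      ((β + 1) * (barrierBase κ a C t ^ (-(β + 1)) / barrierBase κ a C t) *
        (a + C * (κ * t ^ (κ - 1)))) t := by
  refine ((hasDerivAt_barrierBase κ a C ht).rpow_const (Or.inl hpos.ne')).neg.congr_deriv ?_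
  rw [Real.rpow_sub_one hpos.ne']
  ring

lemma continuousOn_barrierBase_rpow (ha : 0 ≤ a) (hκ : κ ≤ 1) (hr : 0 < r)
    (hpos : 0 < barrierBase κ a C r) :
    ContinuousOn (fun t => barrierBase κ a C t ^ (-(β + 1))) (Ici r) := fun _ ht =>
  ((hasDerivAt_barrierBase κ a C (hr.trans_le ht).ne').continuousAt.rpow_const
    (Or.inl (barrierBase_pos_of_le ha hκ hr ht hpos).ne')).continuousWithinAt

lemma intervalIntegrable_barrierBase_rpow (ha : 0 ≤ a) (hκ : κ ≤ 1) (hr : 0 < r) (hr1 : r ≤ 1)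
    (hpos : 0 < barrierBase κ a C r) :
    IntervalIntegrable (fun t => barrierBase κ a C t ^ (-(β + 1))) volume r 1 :=
  ((continuousOn_barrierBase_rpow ha hκ hr hpos).mono
    (uIcc_of_le hr1 ▸ Icc_subset_Ici_self)).intervalIntegrable

lemma hasDerivAt_barrier (ha : 0 ≤ a) (hκ : κ ≤ 1) (hr : 0 < r) (hr1 : r ≤ 1)
    (hpos : 0 < barrierBase κ a C r) :
    HasDerivAt (barrier κ β a C) (-barrierBase κ a C r ^ (-(β + 1))) r := by
  refine intervalIntegral.integral_hasDerivAt_left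
    (intervalIntegrable_barrierBase_rpow ha hκ hr hr1 hpos) ?_
    ((hasDerivAt_barrierBase κ a C hr.ne').continuousAt.rpow_const (Or.inl hpos.ne'))
  refine Measurable.stronglyMeasurable ?_ |>.stronglyMeasurableAtFilter
  unfold barrierBase
  fun_prop

lemma eventually_hasDerivAt_barrier (ha : 0 ≤ a) (hκ : κ ≤ 1) (hr : 0 < r) (hr1 : r < 1)
    (hpos : 0 < barrierBase κ a C r) :
    ∀ᶠ t in 𝓝 r, HasDerivAt (barrier κ β a C) (-barrierBase κ a C t ^ (-(β + 1))) t := by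
  filter_upwards [lt_mem_nhds hr, gt_mem_nhds hr1,
    (hasDerivAt_barrierBase κ a C hr.ne').continuousAt.eventually (lt_mem_nhds hpos)]
    with t ht ht1 htpos using hasDerivAt_barrier ha hκ ht ht1.le htpos

lemma continuousOn_barrier_norm {E : Type*} [SeminormedAddCommGroup E] (ha : 0 ≤ a) (hκ : κ ≤ 1)
    (hr : 0 < r) (hpos : 0 < barrierBase κ a C r) :
    ContinuousOn (fun y : E => barrier κ β a C ‖y‖) (norm ⁻¹' Icc r 1) := fun _ hy =>
  ((hasDerivAt_barrier ha hκ (hr.trans_le hy.1) hy.2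
    (barrierBase_pos_of_le ha hκ hr hy.1 hpos)).continuousAt.comp
      continuous_norm.continuousAt).continuousWithinAt

lemma barrier_one : barrier κ β a C 1 = 0 := intervalIntegral.integral_same

end Barrier

section RadialBarrier

variable {E : Type*} [NormedAddCommGroup E] [InnerProductSpace ℝ E] {κ β a C p q : ℝ} {x : E}

lemma norm_gradient_barrier [CompleteSpace E] (ha : 0 ≤ a) (hκ : κ ≤ 1) (hx : x ≠ 0)
    (hx1 : ‖x‖ ≤ 1) (hpos : 0 < barrierBase κ a C ‖x‖) :
    ‖∇ (fun y : E => barrier κ β a C ‖y‖) x‖ = barrierBase κ a C ‖x‖ ^ (-(β + 1)) := by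
  have hn : ‖x‖ ≠ 0 := norm_ne_zero_iff.2 hx
  rw [(hasGradientAt_radial hx (hasDerivAt_barrier ha hκ (norm_pos_iff.2 hx) hx1 hpos)).gradient,
    norm_smul, norm_div, norm_norm, div_mul_cancel₀ _ hn, norm_neg,
    Real.norm_of_nonneg (Real.rpow_nonneg hpos.le _)]

lemma eventually_differentiableAt_barrier (ha : 0 ≤ a) (hκ : κ ≤ 1) (hx : x ≠ 0)
    (hx1 : ‖x‖ < 1) (hpos : 0 < barrierBase κ a C ‖x‖) :
    ∀ᶠ y in 𝓝 x, DifferentiableAt ℝ (fun y : E => barrier κ β a C ‖y‖) y := by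
  filter_upwards [isOpen_ne.mem_nhds hx, continuous_norm.continuousAt.eventually
    (eventually_hasDerivAt_barrier ha hκ (norm_pos_iff.2 hx) hx1 hpos)] with y hy hderiv
  exact hderiv.differentiableAt.comp y (hasFDerivAt_norm_of_ne_zero hy).differentiableAt

lemma differentiableAt_gradient_barrier [CompleteSpace E] (ha : 0 ≤ a) (hκ : κ ≤ 1)
    (hx : x ≠ 0) (hx1 : ‖x‖ < 1) (hpos : 0 < barrierBase κ a C ‖x‖) :
    DifferentiableAt ℝ (∇ fun y : E => barrier κ β a C ‖y‖) x :=
  (hasFDerivAt_gradient_radial hx (eventually_hasDerivAt_barrier ha hκ (norm_pos_iff.2 hx) hx1 hpos)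
    (hasDerivAt_neg_barrierBase_rpow (norm_ne_zero_iff.2 hx) hpos)).differentiableAt

theorem pLaplacian_barrier [FiniteDimensional ℝ E]
    (hdim : κ * ((β + 1) * (p - 1)) = Module.finrank ℝ E - 1) (hβ : (β + 1) * (q + 1 - p) = 1)
    (ha : 0 ≤ a) (hκ : κ ≤ 1) (hx : x ≠ 0) (hx1 : ‖x‖ < 1) (hpos : 0 < barrierBase κ a C ‖x‖) :
    pLaplacian p (fun y : E => barrier κ β a C ‖y‖) x =
      a * ((1 - κ) * ((β + 1) * (p - 1))) * ‖∇ (fun y : E => barrier κ β a C ‖y‖) x‖ ^ q := by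
  have hn : 0 < ‖x‖ := norm_pos_iff.2 hx
  have hslope : 0 < barrierBase κ a C ‖x‖ ^ (-(β + 1)) := Real.rpow_pos_of_pos hpos _
  have hpow : (barrierBase κ a C ‖x‖ ^ (-(β + 1))) ^ q =
      (barrierBase κ a C ‖x‖ ^ (-(β + 1))) ^ (p - 2) *
        (barrierBase κ a C ‖x‖ ^ (-(β + 1)) / barrierBase κ a C ‖x‖) := by
    rw [← Real.rpow_sub_one hpos.ne', ← Real.rpow_mul hpos.le, ← Real.rpow_mul hpos.le,
      ← Real.rpow_add hpos]
    congr 1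
    linear_combination -hβ
  rw [pLaplacian_radial p hx (eventually_hasDerivAt_barrier ha hκ hn hx1 hpos)
    (hasDerivAt_neg_barrierBase_rpow hn.ne' hpos) (neg_ne_zero.2 hslope.ne'), ← hdim, abs_neg,
    abs_of_pos hslope, norm_gradient_barrier ha hκ hx hx1.le hpos, hpow,
    Real.rpow_sub_one hn.ne']
  generalize hB : barrierBase κ a C ‖x‖ = B at hpos
  have hBx : a * ‖x‖ + C * ‖x‖ ^ κ = B := hB
  field_simp
  linear_combination κ * (p - 1) * (β + 1) * hBx

end RadialBarrier

section BarrierBounds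

variable {κ β a C r t δ : ℝ}

lemma rpow_le_rpow_sub_one_mul (hκ : κ ≤ 1) (hr : 0 < r) (hrt : r ≤ t) :
    t ^ κ ≤ r ^ (κ - 1) * t := by
  have ht : 0 < t := hr.trans_le hrt
  calc t ^ κ = t ^ (κ - 1) * t := by rw [Real.rpow_sub_one ht.ne', div_mul_cancel₀ _ ht.ne']
    _ ≤ r ^ (κ - 1) * t :=
        mul_le_mul_of_nonneg_right (Real.rpow_le_rpow_of_nonpos hr hrt (sub_nonpos.2 hκ)) ht.le

lemma mul_le_barrierBase (hκ : κ ≤ 1) (hC : C ≤ 0) (hr : 0 < r) (hrt : r ≤ t) :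
    (a + C * r ^ (κ - 1)) * t ≤ barrierBase κ a C t := by
  rw [add_mul, mul_assoc, barrierBase]
  exact add_le_add_right (mul_le_mul_of_nonpos_left (rpow_le_rpow_sub_one_mul hκ hr hrt) hC) _

lemma barrierBase_le_mul (hκ : κ ≤ 1) (hC : 0 ≤ C) (hr : 0 < r) (hrt : r ≤ t) :
    barrierBase κ a C t ≤ (a + C * r ^ (κ - 1)) * t := by
  rw [add_mul, mul_assoc, barrierBase]
  exact add_le_add_right (mul_le_mul_of_nonneg_left (rpow_le_rpow_sub_one_mul hκ hr hrt) hC) _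

lemma intervalIntegrable_mul_sub_rpow (ha : 0 < a) (hδ : δ < r) (hr1 : r ≤ 1) :
    IntervalIntegrable (fun t => (a * (t - δ)) ^ (-(β + 1))) volume r 1 := by
  refine (ContinuousOn.rpow_const (by fun_prop) fun t ht => Or.inl ?_).intervalIntegrable
  rw [uIcc_of_le hr1] at ht
  exact (mul_pos ha (sub_pos.2 (hδ.trans_le ht.1))).ne'

lemma integral_mul_sub_rpow (ha : 0 ≤ a) (hβ : 0 < β) (hδ : δ < r) (hr1 : r ≤ 1) :
    ∫ t in r..1, (a * (t - δ)) ^ (-(β + 1)) =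
      a ^ (-(β + 1)) * (((r - δ) ^ (-β) - (1 - δ) ^ (-β)) / β) := by
  have hmul : EqOn (fun t => (a * (t - δ)) ^ (-(β + 1)))
      (fun t => a ^ (-(β + 1)) * (t - δ) ^ (-(β + 1))) (uIcc r 1) := fun t ht => by
    rw [uIcc_of_le hr1] at ht
    exact Real.mul_rpow ha (sub_nonneg.2 (hδ.le.trans ht.1))
  have hzero : (0 : ℝ) ∉ uIcc (r - δ) (1 - δ) := by
    rw [uIcc_of_le (by linarith)]
    exact fun h => by linarith [h.1]
  rw [intervalIntegral.integral_congr hmul, intervalIntegral.integral_const_mul,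
    intervalIntegral.integral_comp_sub_right (fun t => t ^ (-(β + 1))),
    integral_rpow (Or.inr ⟨by linarith, hzero⟩), show -(β + 1) + 1 = -β by ring, div_neg, ← neg_div,
    neg_sub]

lemma le_barrier_of_barrierBase_le {a' : ℝ} (ha : 0 ≤ a) (ha' : 0 < a') (hκ : κ ≤ 1) (hβ : 0 < β)
    (hr : 0 < r) (hr1 : r ≤ 1) (hδ : δ < r) (hpos : 0 < barrierBase κ a C r)
    (hle : ∀ t ∈ Icc r 1, barrierBase κ a C t ≤ a' * (t - δ)) :
    a' ^ (-(β + 1)) * (((r - δ) ^ (-β) - (1 - δ) ^ (-β)) / β) ≤ barrier κ β a C r := by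
  rw [← integral_mul_sub_rpow ha'.le hβ hδ hr1]
  refine intervalIntegral.integral_mono_on hr1 (intervalIntegrable_mul_sub_rpow ha' hδ hr1)
    (intervalIntegrable_barrierBase_rpow ha hκ hr hr1 hpos) fun t ht => ?_
  exact Real.rpow_le_rpow_of_nonpos (barrierBase_pos_of_le ha hκ hr ht.1 hpos) (hle t ht)
    (by linarith)

lemma le_barrier (ha : 0 < a) (hκ : κ ≤ 1) (hβ : 0 < β) (hC : 0 ≤ C) (hr : 0 < r) (hr1 : r ≤ 1) :
    (a + C * r ^ (κ - 1)) ^ (-(β + 1)) * ((r ^ (-β) - 1) / β) ≤ barrier κ β a C r := by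
  have hpos : 0 < barrierBase κ a C r := by unfold barrierBase; positivity
  simpa using le_barrier_of_barrierBase_le (δ := 0) ha.le (by positivity) hκ hβ hr hr1 hr hpos
    fun t ht => by simpa using barrierBase_le_mul hκ hC hr ht.1

lemma barrier_le (ha : 0 ≤ a) (hκ : κ ≤ 1) (hβ : 0 < β) (hC : C ≤ 0) (hr : 0 < r) (hr1 : r ≤ 1)
    (hpos : 0 < a + C * r ^ (κ - 1)) :
    barrier κ β a C r ≤ (a + C * r ^ (κ - 1)) ^ (-(β + 1)) * ((r ^ (-β) - 1) / β) := by
  have hint := integral_mul_sub_rpow (δ := 0) hpos.le hβ hr hr1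
  simp only [sub_zero, Real.one_rpow] at hint
  rw [← hint]
  refine intervalIntegral.integral_mono_on hr1 (intervalIntegrable_barrierBase_rpow ha hκ hr hr1
    ((mul_pos hpos hr).trans_le (mul_le_barrierBase hκ hC hr le_rfl)))
    (by simpa using intervalIntegrable_mul_sub_rpow hpos hr hr1) fun t ht => ?_
  exact Real.rpow_le_rpow_of_nonpos (mul_pos hpos (hr.trans_le ht.1))
    (mul_le_barrierBase hκ hC hr ht.1) (by linarith)

lemma tendsto_barrier_atTop (ha : 0 < a) (hκ0 : 0 ≤ κ) (hκ : κ < 1) (hβ : 0 < β) (hC : C ≤ 0)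
    (hδ : 0 < δ) (hδ1 : δ < 1) (hzero : barrierBase κ a C δ = 0) :
    Tendsto (barrier κ β a C) (𝓝[>] δ) atTop := by
  have hlower : Tendsto (fun r => a ^ (-(β + 1)) * (((r - δ) ^ (-β) - (1 - δ) ^ (-β)) / β))
      (𝓝[>] δ) atTop := by
    have hsub : Tendsto (fun r => r - δ) (𝓝[>] δ) (𝓝[>] 0) := by
      refine tendsto_nhdsWithin_iff.2 ⟨?_, eventually_mem_nhdsWithin.mono fun r hr =>
        mem_Ioi.2 (sub_pos.2 hr)⟩
      exact tendsto_nhdsWithin_of_tendsto_nhds (by simpa using (continuous_sub_right δ).tendsto δ)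
    exact (tendsto_atTop_add_const_right _ _
      ((tendsto_rpow_neg_nhdsGT_zero (neg_neg_of_pos hβ)).comp hsub)).atTop_div_const hβ
        |>.const_mul_atTop (Real.rpow_pos_of_pos ha _)
  refine tendsto_atTop_mono' _ ?_ hlower
  filter_upwards [self_mem_nhdsWithin, mem_nhdsWithin_of_mem_nhds (gt_mem_nhds hδ1)] with r hr hr1
  refine le_barrier_of_barrierBase_le ha.le ha hκ.le hβ (hδ.trans hr) (le_of_lt hr1) hr
    (barrierBase_pos_of_lt ha hκ hδ hr hzero) fun t ht => ?_
  have hmono : δ ^ κ ≤ t ^ κ :=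
    Real.rpow_le_rpow hδ.le ((le_of_lt hr).trans ht.1) hκ0
  have := mul_le_mul_of_nonpos_left hmono hC
  rw [barrierBase] at hzero ⊢
  linarith

lemma barrier_le_of_pos (ha : 0 ≤ a) (hκ : κ ≤ 1) (hβ : 0 ≤ β) (hC : 0 < C) (hr : 0 < r)
    (hr1 : r ≤ 1) :
    barrier κ β a C r ≤ C ^ (-(β + 1)) * ∫ t in r..1, t ^ (-(κ * (β + 1))) := by
  have hpos : 0 < barrierBase κ a C r := by unfold barrierBase; positivity
  have hzero : (0 : ℝ) ∉ uIcc r 1 := by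
    rw [uIcc_of_le hr1]
    exact fun h => hr.not_ge h.1
  rw [← intervalIntegral.integral_const_mul]
  refine intervalIntegral.integral_mono_on hr1
    (intervalIntegrable_barrierBase_rpow ha hκ hr hr1 hpos)
    ((intervalIntegral.intervalIntegrable_rpow (Or.inr hzero)).const_mul _) fun t ht => ?_
  have ht0 : 0 < t := hr.trans_le ht.1
  calc barrierBase κ a C t ^ (-(β + 1))
      ≤ (C * t ^ κ) ^ (-(β + 1)) := by
        refine Real.rpow_le_rpow_of_nonpos (by positivity) ?_ (by linarith)
        exact le_add_of_nonneg_left (by positivity)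
    _ = C ^ (-(β + 1)) * t ^ (-(κ * (β + 1))) := by
        rw [Real.mul_rpow hC.le (by positivity), ← Real.rpow_mul ht0.le, mul_neg]

end BarrierBounds

section FundamentalSolution

variable {N : ℕ} {p : ℝ}

lemma integral_rpow_le_mup (hp : 1 < p) (hpN : p ≤ N) {x : EuclideanSpace ℝ (Fin N)} (hx : x ≠ 0)
    (hx1 : ‖x‖ ≤ 1) :
    ∫ t in ‖x‖..1, t ^ (-((N - 1) / (p - 1))) ≤ mup N p x := by
  have hn : 0 < ‖x‖ := norm_pos_iff.2 hx
  have hp' : 0 < p - 1 := by linarith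
  have hzero : (0 : ℝ) ∉ uIcc ‖x‖ 1 := by
    rw [uIcc_of_le hx1]
    exact fun h => hn.not_ge h.1
  unfold mup
  split_ifs with hlt
  · have hNp : 0 < N - p := by linarith
    have hexp : -((N - 1) / (p - 1)) + 1 = (p - N) / (p - 1) := by field_simp; ring
    have hne : -((N - 1) / (p - 1)) ≠ -1 := fun h => by
      rw [neg_inj, div_eq_one_iff_eq hp'.ne'] at h
      linarith
    rw [integral_rpow (Or.inr ⟨hne, hzero⟩), hexp, Real.one_rpow]
    have hsplit : (1 - ‖x‖ ^ ((p - N) / (p - 1))) / ((p - N) / (p - 1)) =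
        (p - 1) / (N - p) * ‖x‖ ^ ((p - N) / (p - 1)) - (p - 1) / (N - p) := by
      rw [← neg_sub (N : ℝ) p]
      field_simp
      ring
    rw [hsplit]
    exact sub_le_self _ (by positivity)
  · have hNp : p = N := le_antisymm hpN (not_lt.1 hlt)
    rw [← hNp, div_self hp'.ne']
    simp only [Real.rpow_neg_one, integral_inv hzero, one_div, Real.log_inv, le_refl]

lemma tendsto_mup_atTop (hp : 1 < p) : Tendsto (mup N p) (𝓝[≠] 0) atTop := by
  unfold mup
  split_ifs with hlt
  · have hexp : (p - N) / (p - 1) < 0 := div_neg_of_neg_of_pos (by linarith) (by linarith)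
    exact ((tendsto_rpow_neg_nhdsGT_zero hexp).comp tendsto_norm_nhdsNE_zero).const_mul_atTop
      (div_pos (by linarith) (by linarith))
  · exact tendsto_neg_atBot_atTop.comp (Real.tendsto_log_nhdsGT_zero.comp tendsto_norm_nhdsNE_zero)

lemma tendsto_sub_mul_atTop_of_div {α : Type*} {l : Filter α} {f g : α → ℝ} (K : ℝ)
    (hdiv : Tendsto (fun x => f x / g x) l atTop) (hg : Tendsto g l atTop) :
    Tendsto (fun x => f x - K * g x) l atTop := by
  refine ((tendsto_atTop_add_const_right l (-K) hdiv).atTop_mul_atTop₀ hg).congr' ?_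
  filter_upwards [hg.eventually_gt_atTop 0] with x hx
  field_simp
  ring

end FundamentalSolution

section MaximumPrinciple

lemma le_of_forall_not_isLocalMax {X : Type*} [TopologicalSpace X] {K U : Set X} {h : X → ℝ}
    {m : ℝ} {x : X} (hK : IsCompact K) (hU : IsOpen U) (hUK : U ⊆ K) (hh : ContinuousOn h K)
    (hbd : ∀ y ∈ K \ U, h y ≤ m) (hmax : ∀ y ∈ U, ¬ IsLocalMax h y) (hx : x ∈ K) : h x ≤ m := by
  obtain ⟨z, hzK, hz⟩ := hK.exists_isMaxOn ⟨x, hx⟩ hh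
  by_cases hzU : z ∈ U
  · exact absurd (hz.isLocalMax (mem_of_superset (hU.mem_nhds hzU) hUK)) (hmax z hzU)
  · exact (hz hx).trans (hbd z ⟨hzK, hzU⟩)

lemma isCompact_annulus {E : Type*} [SeminormedAddCommGroup E] [ProperSpace E] (ρ R : ℝ) :
    IsCompact (norm ⁻¹' Icc ρ R : Set E) :=
  (isCompact_closedBall (0 : E) R).of_isClosed_subset (isClosed_Icc.preimage continuous_norm)
    fun _ hy => mem_closedBall_zero_iff.2 hy.2

lemma le_of_forall_not_isLocalMax_annulus {E : Type*} [SeminormedAddCommGroup E] [ProperSpace E]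
    {h : E → ℝ} {ρ R m : ℝ} {x : E} (hh : ContinuousOn h (norm ⁻¹' Icc ρ R))
    (hinner : ∀ y, ‖y‖ = ρ → h y ≤ m) (houter : ∀ y, ‖y‖ = R → h y ≤ m)
    (hmax : ∀ y, ‖y‖ ∈ Ioo ρ R → ¬ IsLocalMax h y) (hx : ‖x‖ ∈ Icc ρ R) : h x ≤ m := by
  refine le_of_forall_not_isLocalMax (isCompact_annulus ρ R) (isOpen_Ioo.preimage continuous_norm)
    (preimage_mono Ioo_subset_Icc_self) hh (fun y hy => ?_) hmax hx
  rw [← preimage_sdiff, Icc_sdiff_Ioo_same (hx.1.trans hx.2)] at hy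
  exact hy.elim (hinner y) (houter y)

end MaximumPrinciple

section Comparison

variable {N : ℕ} {p q κ β a C : ℝ} {G : Set (EuclideanSpace ℝ (Fin N))}
  {u φ : EuclideanSpace ℝ (Fin N) → ℝ} {x : EuclideanSpace ℝ (Fin N)}

lemma IsStrongSolution.pLaplacian_eq (hu : IsStrongSolution p q G u) (hx : x ∈ G) :
    pLaplacian p u x = ‖∇ u x‖ ^ q :=
  (hu.2.2 x hx).2

lemma IsStrongSolution.eventually_differentiableAt (hu : IsStrongSolution p q G u)
    (hG : IsOpen G) (hx : x ∈ G) : ∀ᶠ y in 𝓝 x, DifferentiableAt ℝ u y := by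
  filter_upwards [hG.mem_nhds hx] with y hy
  exact (hu.1.contDiffAt (hG.mem_nhds hy)).differentiableAt one_ne_zero

lemma IsStrongSolution.differentiableAt_gradient (hu : IsStrongSolution p q G u) (hG : IsOpen G)
    (hx : x ∈ G) (hne : ∇ u x ≠ 0) : DifferentiableAt ℝ (∇ u) x := by
  have hcont : ContinuousAt (∇ u) x :=
    (InnerProductSpace.toDual ℝ _).symm.continuous.continuousAt.comp
      ((hu.1.continuousOn_fderiv_of_isOpen hG le_rfl).continuousAt (hG.mem_nhds hx))
  have hmem : {y | y ∈ G ∧ ∇ u y ≠ 0} ∈ 𝓝 x :=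
    inter_mem (hG.mem_nhds hx) (hcont (isOpen_ne.mem_nhds hne))
  have hfderiv : DifferentiableAt ℝ (fderiv ℝ u) x :=
    ((hu.2.1.contDiffAt hmem).fderiv_right (m := 1) (by norm_num)).differentiableAt one_ne_zero
  exact (InnerProductSpace.toDual ℝ _).symm.differentiable.differentiableAt.comp x hfderiv

lemma IsStrongSolution.not_isLocalMax_sub (hp : 1 < p) (hu : IsStrongSolution p q G u)
    (hG : IsOpen G) (hx : x ∈ G) (hφ : ∀ᶠ y in 𝓝 x, DifferentiableAt ℝ φ y)
    (hφ' : DifferentiableAt ℝ (∇ φ) x) (hne : ∇ φ x ≠ 0)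
    (hstrict : pLaplacian p φ x < ‖∇ φ x‖ ^ q) : ¬ IsLocalMax (fun y => u y - φ y) x := by
  intro hmax
  have hdiff := hu.eventually_differentiableAt hG hx
  have hgrad := gradient_eq_of_isLocalMax_sub hdiff.self_of_nhds hφ.self_of_nhds hmax
  refine hstrict.not_ge ?_
  rw [← hgrad, ← hu.pLaplacian_eq hx]
  exact pLaplacian_le_of_isLocalMax_sub hp hmax hdiff hφ
    (hu.differentiableAt_gradient hG hx (hgrad ▸ hne)) hφ' hne

lemma IsStrongSolution.not_isLocalMax_sub_left (hp : 1 < p) (hu : IsStrongSolution p q G u)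
    (hG : IsOpen G) (hx : x ∈ G) (hφ : ∀ᶠ y in 𝓝 x, DifferentiableAt ℝ φ y)
    (hφ' : DifferentiableAt ℝ (∇ φ) x) (hne : ∇ φ x ≠ 0)
    (hstrict : ‖∇ φ x‖ ^ q < pLaplacian p φ x) : ¬ IsLocalMax (fun y => φ y - u y) x := by
  intro hmax
  have hdiff := hu.eventually_differentiableAt hG hx
  have hgrad := gradient_eq_of_isLocalMax_sub hφ.self_of_nhds hdiff.self_of_nhds hmax
  refine hstrict.not_ge ?_
  rw [hgrad, ← hu.pLaplacian_eq hx]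
  exact pLaplacian_le_of_isLocalMax_sub hp hmax hφ hdiff hφ'
    (hu.differentiableAt_gradient hG hx (hgrad ▸ hne)) (hgrad ▸ hne)

end Comparison

section BarrierComparison

variable {N : ℕ} {p q κ β a C m M ρ : ℝ} {G : Set (EuclideanSpace ℝ (Fin N))}
  {u : EuclideanSpace ℝ (Fin N) → ℝ} {x : EuclideanSpace ℝ (Fin N)}

lemma norm_gradient_barrier_pos (ha : 0 ≤ a) (hκ : κ ≤ 1) (hx : x ≠ 0) (hx1 : ‖x‖ ≤ 1)
    (hpos : 0 < barrierBase κ a C ‖x‖) :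
    0 < ‖∇ (fun y : EuclideanSpace ℝ (Fin N) => barrier κ β a C ‖y‖) x‖ := by
  rw [norm_gradient_barrier ha hκ hx hx1 hpos]
  exact Real.rpow_pos_of_pos hpos _

lemma IsStrongSolution.not_isLocalMax_sub_barrier (hp : 1 < p)
    (hdim : κ * ((β + 1) * (p - 1)) = N - 1) (hβ : (β + 1) * (q + 1 - p) = 1)
    (hu : IsStrongSolution p q G u) (hG : IsOpen G) (ha : 0 ≤ a) (hκ : κ ≤ 1) (hx : x ∈ G)
    (hx0 : x ≠ 0) (hx1 : ‖x‖ < 1) (hpos : 0 < barrierBase κ a C ‖x‖)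
    (hab : a * ((1 - κ) * ((β + 1) * (p - 1))) < 1) :
    ¬ IsLocalMax (fun y => u y - barrier κ β a C ‖y‖) x := by
  have hgrad := norm_gradient_barrier_pos (β := β) ha hκ hx0 hx1.le hpos
  refine hu.not_isLocalMax_sub hp hG hx (eventually_differentiableAt_barrier ha hκ hx0 hx1 hpos)
    (differentiableAt_gradient_barrier ha hκ hx0 hx1 hpos) (norm_pos_iff.1 hgrad) ?_
  rw [pLaplacian_barrier (by rwa [finrank_euclideanSpace_fin]) hβ ha hκ hx0 hx1 hpos]
  exact mul_lt_of_lt_one_left (Real.rpow_pos_of_pos hgrad q) hab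

lemma IsStrongSolution.not_isLocalMax_barrier_sub (hp : 1 < p)
    (hdim : κ * ((β + 1) * (p - 1)) = N - 1) (hβ : (β + 1) * (q + 1 - p) = 1)
    (hu : IsStrongSolution p q G u) (hG : IsOpen G) (ha : 0 ≤ a) (hκ : κ ≤ 1) (hx : x ∈ G)
    (hx0 : x ≠ 0) (hx1 : ‖x‖ < 1) (hpos : 0 < barrierBase κ a C ‖x‖)
    (hab : 1 < a * ((1 - κ) * ((β + 1) * (p - 1)))) :
    ¬ IsLocalMax (fun y => barrier κ β a C ‖y‖ - u y) x := by
  have hgrad := norm_gradient_barrier_pos (β := β) ha hκ hx0 hx1.le hpos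
  refine hu.not_isLocalMax_sub_left hp hG hx
    (eventually_differentiableAt_barrier ha hκ hx0 hx1 hpos)
    (differentiableAt_gradient_barrier ha hκ hx0 hx1 hpos) (norm_pos_iff.1 hgrad) ?_
  rw [pLaplacian_barrier (by rwa [finrank_euclideanSpace_fin]) hβ ha hκ hx0 hx1 hpos]
  exact lt_mul_of_one_lt_left (Real.rpow_pos_of_pos hgrad q) hab

lemma IsStrongSolution.continuousOn_annulus (hu : IsStrongSolution p q G u)
    (hball : closedBall 0 1 \ {0} ⊆ G) (hρ : 0 < ρ) : ContinuousOn u (norm ⁻¹' Icc ρ 1) :=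
  hu.1.continuousOn.mono fun _ hy =>
    hball ⟨mem_closedBall_zero_iff.2 hy.2, norm_pos_iff.1 (hρ.trans_le hy.1)⟩

theorem IsStrongSolution.le_barrier_add (hp : 1 < p) (hdim : κ * ((β + 1) * (p - 1)) = N - 1)
    (hβ : (β + 1) * (q + 1 - p) = 1) (hu : IsStrongSolution p q G u) (hG : IsOpen G)
    (hball : closedBall 0 1 \ {0} ⊆ G) (hM : ∀ y, ‖y‖ = 1 → u y ≤ M) (hβ0 : 0 < β) (ha : 0 < a)
    (hκ0 : 0 ≤ κ) (hκ : κ < 1) (hC : C < 0) (hab : a * ((1 - κ) * ((β + 1) * (p - 1))) < 1)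
    (hx0 : x ≠ 0) (hx1 : ‖x‖ < 1) (hpos : 0 < barrierBase κ a C ‖x‖) :
    u x ≤ barrier κ β a C ‖x‖ + M := by
  obtain ⟨δ, hδ, hzero⟩ := exists_barrierBase_eq_zero ha hκ hC
  have hδx : δ < ‖x‖ := by
    by_contra! hle
    exact (barrierBase_pos_of_le ha.le hκ.le (norm_pos_iff.2 hx0) hle hpos).ne' hzero
  obtain ⟨K, hK⟩ := (isCompact_annulus δ 1).bddAbove_image (hu.continuousOn_annulus hball hδ)
  obtain ⟨ρ, hKρ, hδρ, hρx⟩ :=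
    (((tendsto_barrier_atTop ha hκ0 hκ hβ0 hC.le hδ (hδx.trans hx1) hzero).eventually_ge_atTop
      (K - M)).and (Ioo_mem_nhdsGT hδx)).exists
  have hρ : 0 < ρ := hδ.trans hδρ
  have hρpos : 0 < barrierBase κ a C ρ := barrierBase_pos_of_lt ha hκ hδ hδρ hzero
  refine sub_le_iff_le_add'.1 (le_of_forall_not_isLocalMax_annulus (ρ := ρ) (R := 1)
    (h := fun y => u y - barrier κ β a C ‖y‖) ?_ ?_ ?_ ?_ ⟨hρx.le, hx1.le⟩)
  · exact (hu.continuousOn_annulus hball hρ).sub (continuousOn_barrier_norm ha.le hκ.le hρ hρpos)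
  · intro y hy
    have hyK : u y ≤ K := hK (mem_image_of_mem u
      ⟨hδρ.le.trans_eq hy.symm, (hy.trans_lt (hρx.trans hx1)).le⟩)
    rw [hy]
    linarith
  · intro y hy
    simpa only [hy, barrier_one, sub_zero] using hM y hy
  · intro y hy
    have hy0 : y ≠ 0 := norm_pos_iff.1 (hρ.trans hy.1)
    exact hu.not_isLocalMax_sub_barrier hp hdim hβ hG ha.le hκ.le
      (hball ⟨mem_closedBall_zero_iff.2 hy.2.le, hy0⟩) hy0 hy.2
      (barrierBase_pos_of_le ha.le hκ.le hρ hy.1.le hρpos) hab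

lemma eventually_barrier_add_le (hp : 1 < p) (hpN : p ≤ N)
    (hdim : κ * ((β + 1) * (p - 1)) = N - 1) (hβ0 : 0 < β) (ha : 0 ≤ a) (hκ : κ ≤ 1) (hC : 0 < C)
    (m : ℝ) (hinf : Tendsto (fun x => u x / mup N p x) (𝓝[≠] 0) atTop) :
    ∀ᶠ y in 𝓝[≠] 0, barrier κ β a C ‖y‖ + m ≤ u y := by
  have hexp : κ * (β + 1) = (N - 1) / (p - 1) := by
    rw [eq_div_iff (sub_pos.2 hp).ne', mul_assoc, hdim]
  filter_upwards [(tendsto_sub_mul_atTop_of_div (C ^ (-(β + 1))) hinf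
    (tendsto_mup_atTop hp)).eventually_ge_atTop m, eventually_mem_nhdsWithin,
    mem_nhdsWithin_of_mem_nhds (closedBall_mem_nhds 0 one_pos)] with y hm hy0 hy1
  rw [mem_closedBall_zero_iff] at hy1
  have hbar := barrier_le_of_pos (β := β) ha hκ hβ0.le hC (norm_pos_iff.2 hy0) hy1
  have hmup := mul_le_mul_of_nonneg_left (integral_rpow_le_mup hp hpN hy0 hy1)
    (Real.rpow_nonneg hC.le (-(β + 1)))
  rw [hexp] at hbar
  linarith

theorem IsStrongSolution.barrier_add_le (hp : 1 < p) (hpN : p ≤ N)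
    (hdim : κ * ((β + 1) * (p - 1)) = N - 1) (hβ : (β + 1) * (q + 1 - p) = 1)
    (hu : IsStrongSolution p q G u) (hG : IsOpen G) (hball : closedBall 0 1 \ {0} ⊆ G)
    (hinf : Tendsto (fun x => u x / mup N p x) (𝓝[≠] 0) atTop) (hm : ∀ y, ‖y‖ = 1 → m ≤ u y)
    (hβ0 : 0 < β) (ha : 0 ≤ a) (hκ : κ ≤ 1) (hC : 0 < C)
    (hab : 1 < a * ((1 - κ) * ((β + 1) * (p - 1)))) (hx0 : x ≠ 0) (hx1 : ‖x‖ < 1) :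
    barrier κ β a C ‖x‖ + m ≤ u x := by
  have hpos {t : ℝ} (ht : 0 < t) : 0 < barrierBase κ a C t := by unfold barrierBase; positivity
  obtain ⟨ε, hε, hball_ε⟩ := nhdsWithin_basis_ball.eventually_iff.1
    (eventually_barrier_add_le hp hpN hdim hβ0 ha hκ hC m hinf)
  obtain ⟨ρ, hρ, hρmin⟩ := exists_between (lt_min hε (norm_pos_iff.2 hx0))
  obtain ⟨hρε, hρx⟩ := lt_min_iff.1 hρmin
  refine le_sub_iff_add_le'.1 (neg_le_neg_iff.1 ?_)
  rw [neg_sub]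
  refine le_of_forall_not_isLocalMax_annulus (ρ := ρ) (R := 1)
    (h := fun y => barrier κ β a C ‖y‖ - u y) ?_ ?_ ?_ ?_ ⟨hρx.le, hx1.le⟩
  · exact (continuousOn_barrier_norm ha hκ hρ (hpos hρ)).sub (hu.continuousOn_annulus hball hρ)
  · intro y hy
    have := hball_ε ⟨mem_ball_zero_iff.2 (hy.trans_lt hρε), norm_pos_iff.1 (hy ▸ hρ)⟩
    linarith
  · intro y hy
    simpa only [hy, barrier_one, zero_sub, neg_le_neg_iff] using hm y hy
  · intro y hy
    have hy0 : y ≠ 0 := norm_pos_iff.1 (hρ.trans hy.1)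
    exact hu.not_isLocalMax_barrier_sub hp hdim hβ hG ha hκ
      (hball ⟨mem_closedBall_zero_iff.2 hy.2.le, hy0⟩) hy0 hy.2 (hpos (norm_pos_iff.2 hy0)) hab

end BarrierComparison

section Limit

variable {N : ℕ} {p q κ β b m M : ℝ} {G : Set (EuclideanSpace ℝ (Fin N))}
  {u : EuclideanSpace ℝ (Fin N) → ℝ} {x : EuclideanSpace ℝ (Fin N)}

lemma tendsto_inv_add_add_mul (b s : ℝ) :
    Tendsto (fun C : ℝ => b⁻¹ + C + C * s) (𝓝 0) (𝓝 b⁻¹) := by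
  have hcont : Continuous fun C : ℝ => b⁻¹ + C + C * s := by fun_prop
  simpa using hcont.tendsto 0

lemma tendsto_inv_add_add_mul_rpow (hb : 0 < b) (β s c m : ℝ) :
    Tendsto (fun C : ℝ => (b⁻¹ + C + C * s) ^ (-(β + 1)) * c + m) (𝓝 0)
      (𝓝 (b ^ (β + 1) * c + m)) := by
  rw [← inv_inv b, ← Real.rpow_neg_eq_inv_rpow, inv_inv]
  exact ((tendsto_inv_add_add_mul b s).rpow_const (Or.inl (inv_pos.2 hb).ne')).mul_const c
    |>.add_const m

theorem IsStrongSolution.le_rpow_add (hp : 1 < p) (hdim : κ * ((β + 1) * (p - 1)) = N - 1)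
    (hβ : (β + 1) * (q + 1 - p) = 1) (hb : (1 - κ) * ((β + 1) * (p - 1)) = b)
    (hu : IsStrongSolution p q G u) (hG : IsOpen G) (hball : closedBall 0 1 \ {0} ⊆ G)
    (hM : ∀ y, ‖y‖ = 1 → u y ≤ M) (hβ0 : 0 < β) (hb0 : 0 < b) (hκ0 : 0 ≤ κ) (hκ : κ < 1)
    (hx0 : x ≠ 0) (hx1 : ‖x‖ < 1) :
    u x ≤ b ^ (β + 1) * ((‖x‖ ^ (-β) - 1) / β) + M := by
  have hn : 0 < ‖x‖ := norm_pos_iff.2 hx0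
  have hinv : 0 < b⁻¹ := inv_pos.2 hb0
  refine ge_of_tendsto ((tendsto_inv_add_add_mul_rpow hb0 β (‖x‖ ^ (κ - 1))
    ((‖x‖ ^ (-β) - 1) / β) M).mono_left (nhdsWithin_le_nhds (s := Iio 0))) ?_
  filter_upwards [self_mem_nhdsWithin,
    mem_nhdsWithin_of_mem_nhds (lt_mem_nhds (neg_neg_of_pos hinv)),
    mem_nhdsWithin_of_mem_nhds ((tendsto_inv_add_add_mul b _).eventually (lt_mem_nhds hinv))]
    with C (hC : C < 0) hCb hcoef
  have ha : 0 < b⁻¹ + C := neg_lt_iff_pos_add'.1 hCb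
  have hbase := (mul_pos hcoef hn).trans_le (mul_le_barrierBase hκ.le hC.le hn le_rfl)
  have hab : (b⁻¹ + C) * b < 1 := by
    rw [add_mul, inv_mul_cancel₀ hb0.ne']
    linarith [mul_neg_of_neg_of_pos hC hb0]
  exact (hu.le_barrier_add hp hdim hβ hG hball hM hβ0 ha hκ0 hκ hC (hb ▸ hab) hx0 hx1 hbase).trans
    (by gcongr; exact barrier_le ha.le hκ.le hβ0 hC.le hn hx1.le hcoef)

theorem IsStrongSolution.rpow_add_le (hp : 1 < p) (hpN : p ≤ N)
    (hdim : κ * ((β + 1) * (p - 1)) = N - 1) (hβ : (β + 1) * (q + 1 - p) = 1)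
    (hb : (1 - κ) * ((β + 1) * (p - 1)) = b) (hu : IsStrongSolution p q G u) (hG : IsOpen G)
    (hball : closedBall 0 1 \ {0} ⊆ G)
    (hinf : Tendsto (fun x => u x / mup N p x) (𝓝[≠] 0) atTop) (hm : ∀ y, ‖y‖ = 1 → m ≤ u y)
    (hβ0 : 0 < β) (hb0 : 0 < b) (hκ : κ ≤ 1) (hx0 : x ≠ 0) (hx1 : ‖x‖ < 1) :
    b ^ (β + 1) * ((‖x‖ ^ (-β) - 1) / β) + m ≤ u x := by
  refine le_of_tendsto ((tendsto_inv_add_add_mul_rpow hb0 β (‖x‖ ^ (κ - 1))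
    ((‖x‖ ^ (-β) - 1) / β) m).mono_left (nhdsWithin_le_nhds (s := Ioi 0))) ?_
  filter_upwards [self_mem_nhdsWithin] with C (hC : 0 < C)
  have ha : 0 < b⁻¹ + C := by positivity
  have hab : 1 < (b⁻¹ + C) * b := by
    rw [add_mul, inv_mul_cancel₀ hb0.ne']
    linarith [mul_pos hC hb0]
  refine le_trans ?_
    (hu.barrier_add_le hp hpN hdim hβ hG hball hinf hm hβ0 ha.le hκ hC (hb ▸ hab) hx0 hx1)
  gcongr
  exact le_barrier ha hκ hβ0 hC.le (norm_pos_iff.2 hx0) hx1.le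

lemma tendsto_norm_rpow_mul_of_bounds {E : Type*} [NormedAddCommGroup E] {f : E → ℝ}
    {β c m M : ℝ} (hβ : 0 < β)
    (hf : ∀ x, 0 < ‖x‖ → ‖x‖ < 1 →
      c * (‖x‖ ^ (-β) - 1) + m ≤ f x ∧ f x ≤ c * (‖x‖ ^ (-β) - 1) + M) :
    Tendsto (fun x => ‖x‖ ^ β * f x) (𝓝[≠] 0) (𝓝 c) := by
  have hlim (k : ℝ) : Tendsto (fun x : E => c + ‖x‖ ^ β * (k - c)) (𝓝[≠] 0) (𝓝 c) := by
    have hnorm : Tendsto (fun x : E => ‖x‖ ^ β) (𝓝[≠] 0) (𝓝 0) := by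
      have hcont : Continuous fun x : E => ‖x‖ ^ β :=
        continuous_norm.rpow_const fun _ => Or.inr hβ.le
      simpa [Real.zero_rpow hβ.ne'] using (hcont.tendsto 0).mono_left nhdsWithin_le_nhds
    simpa using (hnorm.mul_const (k - c)).const_add c
  have hexpand {x : E} (hx : 0 < ‖x‖) (k : ℝ) :
      c + ‖x‖ ^ β * (k - c) = ‖x‖ ^ β * (c * (‖x‖ ^ (-β) - 1) + k) := by
    rw [Real.rpow_neg hx.le]
    field_simp [(Real.rpow_pos_of_pos hx β).ne']
    ring
  have hnear : ∀ᶠ x : E in 𝓝[≠] 0, 0 < ‖x‖ ∧ ‖x‖ < 1 := by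
    filter_upwards [eventually_mem_nhdsWithin, mem_nhdsWithin_of_mem_nhds (ball_mem_nhds 0 one_pos)]
      with x hx hx1 using ⟨norm_pos_iff.2 hx, mem_ball_zero_iff.1 hx1⟩
  refine tendsto_of_tendsto_of_tendsto_of_le_of_le' (hlim m) (hlim M) ?_ ?_
  · filter_upwards [hnear] with x ⟨hx, hx1⟩
    rw [hexpand hx]
    exact mul_le_mul_of_nonneg_left (hf x hx hx1).1 (by positivity)
  · filter_upwards [hnear] with x ⟨hx, hx1⟩
    rw [hexpand hx]
    exact mul_le_mul_of_nonneg_left (hf x hx hx1).2 (by positivity)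

end Limit

section StrongSingularity

variable {N : ℕ} {p q : ℝ} {G : Set (EuclideanSpace ℝ (Fin N))}
  {u : EuclideanSpace ℝ (Fin N) → ℝ} {x : EuclideanSpace ℝ (Fin N)}

/-- The blow-up exponent `β_q` of strongly singular solutions. -/
noncomputable def singularityExponent (p q : ℝ) : ℝ :=
  (p - q) / (q + 1 - p)

/-- The blow-up constant `λ_{N,p,q}` of strongly singular solutions. -/
noncomputable def singularityConstant (N : ℕ) (p q : ℝ) : ℝ :=
  (singularityExponent p q)⁻¹
    * (((N : ℝ) * (p - 1) - ((N : ℝ) - 1) * q) / (q + 1 - p)) ^ (1 / (q + 1 - p))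

lemma singularityExponent_add_one (hq : p - 1 < q) :
    singularityExponent p q + 1 = 1 / (q + 1 - p) := by
  have hs : q + 1 - p ≠ 0 := by linarith
  rw [singularityExponent]
  field_simp
  ring

lemma singularityExponent_pos (hp : 1 < p) (hpN : p ≤ N) (hq1 : p - 1 < q)
    (hq2 : q < (N : ℝ) * (p - 1) / ((N : ℝ) - 1)) : 0 < singularityExponent p q := by
  have hcrit : (N : ℝ) * (p - 1) / ((N : ℝ) - 1) ≤ p :=
    (div_le_iff₀ (by linarith)).2 (by linarith)
  exact div_pos (by linarith) (by linarith)

theorem IsStrongSolution.two_sided_bound (hu : IsStrongSolution p q G u) (hp : 1 < p)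
    (hpN : p ≤ N) (hq1 : p - 1 < q) (hq2 : q < (N : ℝ) * (p - 1) / ((N : ℝ) - 1)) (hG : IsOpen G)
    (hball : closedBall 0 1 \ {0} ⊆ G)
    (hinf : Tendsto (fun x => u x / mup N p x) (𝓝[≠] 0) atTop) {m M : ℝ}
    (hm : ∀ y, ‖y‖ = 1 → m ≤ u y) (hM : ∀ y, ‖y‖ = 1 → u y ≤ M) (hx0 : 0 < ‖x‖) (hx1 : ‖x‖ < 1) :
    singularityConstant N p q * (‖x‖ ^ (-singularityExponent p q) - 1) + m ≤ u x ∧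
      u x ≤ singularityConstant N p q * (‖x‖ ^ (-singularityExponent p q) - 1) + M := by
  have hs : 0 < q + 1 - p := by linarith
  have hp' : 0 < p - 1 := by linarith
  have hN : 0 < (N : ℝ) - 1 := by linarith
  have hcrit : (N - 1) * q < N * (p - 1) := by rwa [lt_div_iff₀' hN] at hq2
  have hβ0 : 0 < singularityExponent p q := singularityExponent_pos hp hpN hq1 hq2
  have hβ_add := singularityExponent_add_one hq1
  rw [singularityConstant, ← hβ_add, mul_assoc, ← mul_assoc, mul_comm _⁻¹, mul_assoc,
    inv_mul_eq_div]
  set β := singularityExponent p q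
  set κ := (N - 1) * (q + 1 - p) / (p - 1) with hκ_def
  have hκ : κ < 1 := by
    rw [hκ_def, div_lt_one hp']
    linarith
  have hdim : κ * ((β + 1) * (p - 1)) = N - 1 := by
    rw [hβ_add, hκ_def]
    field_simp
  have hβ : (β + 1) * (q + 1 - p) = 1 := by rw [hβ_add, one_div_mul_cancel hs.ne']
  have hb : (1 - κ) * ((β + 1) * (p - 1)) = (N * (p - 1) - (N - 1) * q) / (q + 1 - p) := by
    rw [sub_mul, hdim, hβ_add]
    field_simp
    ring
  have hb0 := div_pos (sub_pos.2 hcrit) hs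
  have hx : x ≠ 0 := norm_pos_iff.1 hx0
  exact ⟨hu.rpow_add_le hp hpN hdim hβ hb hG hball hinf hm hβ0 hb0 hκ.le hx hx1,
    hu.le_rpow_add hp hdim hβ hb hG hball hM hβ0 hb0 (by positivity) hκ hx hx1⟩

theorem singularity_strong_general (hp : 1 < p) (hpN : p ≤ N) (hq1 : p - 1 < q)
    (hq2 : q < (N : ℝ) * (p - 1) / ((N : ℝ) - 1)) (hG : IsOpen G)
    (hball : closedBall 0 1 \ {0} ⊆ G) (hu : IsStrongSolution p q G u)
    (hinf : Tendsto (fun x => u x / mup N p x) (𝓝[≠] 0) atTop) :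
    Tendsto (fun x => ‖x‖ ^ singularityExponent p q * u x) (𝓝[≠] 0)
      (𝓝 (singularityConstant N p q)) ∧
    ∀ x : EuclideanSpace ℝ (Fin N), 0 < ‖x‖ → ‖x‖ < 1 →
      singularityConstant N p q * (‖x‖ ^ (-singularityExponent p q) - 1) +
          sInf (u '' sphere 0 1) ≤ u x ∧
      u x ≤ singularityConstant N p q * (‖x‖ ^ (-singularityExponent p q) - 1) +
          sSup (u '' sphere 0 1) := by
  have hsphere : IsCompact (u '' sphere 0 1) := (isCompact_sphere 0 1).image_of_continuousOn <|
    hu.1.continuousOn.mono fun y hy =>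
      hball ⟨sphere_subset_closedBall hy, ne_of_mem_sphere hy one_ne_zero⟩
  have hmem {y} (hy : ‖y‖ = 1) : u y ∈ u '' sphere 0 1 :=
    mem_image_of_mem u (mem_sphere_zero_iff_norm.2 hy)
  have hbounds (x) (hx0 : 0 < ‖x‖) (hx1 : ‖x‖ < 1) :=
    hu.two_sided_bound hp hpN hq1 hq2 hG hball hinf
      (fun y hy => csInf_le hsphere.bddBelow (hmem hy))
      (fun y hy => le_csSup hsphere.bddAbove (hmem hy)) hx0 hx1
  exact ⟨tendsto_norm_rpow_mul_of_bounds (singularityExponent_pos hp hpN hq1 hq2) hbounds, hbounds⟩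

end StrongSingularity

/-- Strongly singular behaviour: if `u/μ_p → ∞` at the singularity, then
`|x|^{β_q} u(x) → λ_{N,p,q}`, with two-sided bounds. -/
theorem singularity_strong (N : ℕ) (hN : 2 ≤ N) (p q : ℝ) (hp1 : 1 < p) (hpN : p ≤ N)
    (hq1 : p - 1 < q) (hq2 : q < (N : ℝ) * (p - 1) / ((N : ℝ) - 1))
    (Ω : Set (EuclideanSpace ℝ (Fin N))) (hΩ : IsOpen Ω)
    (hball : Metric.closedBall (0 : EuclideanSpace ℝ (Fin N)) 1 ⊆ Ω)
    (u : EuclideanSpace ℝ (Fin N) → ℝ) (hu : IsStrongSolution p q (Ω \ {0}) u)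
    (hpos : ∀ x ∈ Ω \ {0}, 0 < u x)
    (hliminf : Filter.Tendsto (fun x => u x / mup N p x)
      (𝓝[≠] (0 : EuclideanSpace ℝ (Fin N))) Filter.atTop) :
    Filter.Tendsto (fun x => ‖x‖ ^ ((p - q) / (q + 1 - p)) * u x)
      (𝓝[≠] (0 : EuclideanSpace ℝ (Fin N)))
      (nhds (((p - q) / (q + 1 - p))⁻¹
        * (((N : ℝ) * (p - 1) - ((N : ℝ) - 1) * q) / (q + 1 - p)) ^ (1 / (q + 1 - p)))) ∧
    ∀ x : EuclideanSpace ℝ (Fin N), 0 < ‖x‖ → ‖x‖ < 1 →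
      ((p - q) / (q + 1 - p))⁻¹
          * (((N : ℝ) * (p - 1) - ((N : ℝ) - 1) * q) / (q + 1 - p)) ^ (1 / (q + 1 - p))
          * (‖x‖ ^ (-((p - q) / (q + 1 - p))) - 1) ≤ u x ∧
      u x ≤ ((p - q) / (q + 1 - p))⁻¹
          * (((N : ℝ) * (p - 1) - ((N : ℝ) - 1) * q) / (q + 1 - p)) ^ (1 / (q + 1 - p))
          * (‖x‖ ^ (-((p - q) / (q + 1 - p))) - 1)
        + sSup (u '' Metric.sphere (0 : EuclideanSpace ℝ (Fin N)) 1) := by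
  obtain ⟨hlim, hbounds⟩ := singularity_strong_general hp1 hpN hq1 hq2
    (hΩ.sdiff isClosed_singleton) (sdiff_subset_sdiff_left hball) hu hliminf
  have hinf_nonneg : 0 ≤ sInf (u '' sphere 0 1) :=
    Real.sInf_nonneg (forall_mem_image.2 fun y hy => (hpos y
      ⟨hball (sphere_subset_closedBall hy), ne_of_mem_sphere hy one_ne_zero⟩).le)
  exact ⟨hlim, fun x hx0 hx1 =>
    (hbounds x hx0 hx1).imp_left (le_add_of_nonneg_right hinf_nonneg).trans⟩
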